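/- The polynomial algebra ℚ[x_1,…,x_8] is a free module of rank 696729600 over its invariant subalgebra ℚ[x_1,…,x_8]^{W(E₈)}. -/

import Mathlib

open MvPolynomial

noncomputable section

/-- The Cartan matrix of type `E₈` in Bourbaki numbering. -/
def cartanE8 : Matrix (Fin 8) (Fin 8) ℚ :=
  !![2, 0, -1, 0, 0, 0, 0, 0;
     0, 2, 0, -1, 0, 0, 0, 0;
     -1, 0, 2, -1, 0, 0, 0, 0;
     0, -1, -1, 2, -1, 0, 0, 0;
     0, 0, 0, -1, 2, -1, 0, 0;
     0, 0, 0, 0, -1, 2, -1, 0;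
     0, 0, 0, 0, 0, -1, 2, -1;
     0, 0, 0, 0, 0, 0, -1, 2]

/-- The linear functional `v ↦ ∑ j, A j i * v j`. -/
def phiE8 (i : Fin 8) : (Fin 8 → ℚ) →ₗ[ℚ] ℚ :=
  ∑ j, cartanE8 j i • LinearMap.proj j

lemma phiE8_apply (i : Fin 8) (v : Fin 8 → ℚ) :
    phiE8 i v = ∑ j, cartanE8 j i * v j := by
  simp [phiE8, LinearMap.proj]

/-- The simple reflection `s_i` as a linear endomorphism:
`s_i (e_j) = e_j - A j i • e_i`. -/
def reflE8 (i : Fin 8) : Module.End ℚ (Fin 8 → ℚ) :=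
  LinearMap.id - (phiE8 i).smulRight (Pi.single i 1)

lemma cartanE8_diag (i : Fin 8) : cartanE8 i i = 2 := by
  fin_cases i <;> norm_num [cartanE8]

lemma phiE8_single (i : Fin 8) : phiE8 i (Pi.single i 1) = 2 := by
  rw [phiE8_apply]
  rw [Finset.sum_eq_single i]
  · simp [cartanE8_diag]
  · intro b _ hb
    simp [Pi.single_apply, hb]
  · simp

lemma reflE8_apply_self (i : Fin 8) (v : Fin 8 → ℚ) :
    reflE8 i (reflE8 i v) = v := by
  have h : phiE8 i (reflE8 i v) = - phiE8 i v := by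
    simp only [reflE8, LinearMap.sub_apply, LinearMap.id_apply,
      LinearMap.smulRight_apply, map_sub, map_smul, smul_eq_mul, phiE8_single]
    ring
  have h2 : reflE8 i (reflE8 i v) = reflE8 i v - phiE8 i (reflE8 i v) • (Pi.single i 1 : Fin 8 → ℚ) := rfl
  rw [h2, h]
  have h3 : reflE8 i v = v - phiE8 i v • (Pi.single i 1 : Fin 8 → ℚ) := rfl
  rw [h3]
  module

lemma reflE8_invol (i : Fin 8) : reflE8 i * reflE8 i = 1 := by
  apply LinearMap.ext
  intro v
  exact reflE8_apply_self i v

/-- The simple reflection `s_i` as an element of `GL(ℚ⁸)`. -/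
def sE8 (i : Fin 8) : (Module.End ℚ (Fin 8 → ℚ))ˣ :=
  ⟨reflE8 i, reflE8 i, reflE8_invol i, reflE8_invol i⟩

/-- The Weyl group `W(E₈)`, the subgroup of `GL(ℚ⁸)` generated by the simple
reflections. -/
def WeylE8 : Subgroup (Module.End ℚ (Fin 8 → ℚ))ˣ :=
  Subgroup.closure (Set.range sE8)

/-- The action of an element `g ∈ GL(ℚ⁸)` on polynomials by linear substitution
of variables: `(g · f)(x) = f (g⁻¹ x)`, i.e. `X i ↦ ∑ j, (g⁻¹ e_j) i • X j`. -/
def polyAct (g : (Module.End ℚ (Fin 8 → ℚ))ˣ) :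
    MvPolynomial (Fin 8) ℚ →ₐ[ℚ] MvPolynomial (Fin 8) ℚ :=
  aeval (fun i => ∑ j, C (((g⁻¹ : (Module.End ℚ (Fin 8 → ℚ))ˣ) :
    Module.End ℚ (Fin 8 → ℚ)) (Pi.single j 1) i) * X j)

end

/-- The invariant subalgebra `ℚ[x₁,…,x₈]^{W(E₈)}`. -/
noncomputable def invSubalgebra : Subalgebra ℚ (MvPolynomial (Fin 8) ℚ) :=
  ⨅ g ∈ WeylE8, AlgHom.equalizer (polyAct g) (AlgHom.id ℚ (MvPolynomial (Fin 8) ℚ))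

/-!
Freeness is Chevalley's argument. Homogeneous polynomials that form a basis of the quotient by the
Hilbert ideal span the polynomial ring over the invariants by induction on the degree. They are
linearly independent because of an exchange property: if an invariant `r` lies outside an ideal `J`
of invariants and `r * p` lies in the extension of `J`, then `p` lies in the Hilbert ideal. This is
proved by induction on the degree of `p`, since the divided differences `(p - s • p) / ℓ` along
reflections inherit the hypothesis and have lower degree. The rank is the order of the group by
Galois theory of the fraction fields.

The order of `W(E₈)` comes from fixing the simple roots `α₈, α₇, …, α₁` one after the other. The
orbit of `α i` under the subgroup fixing the later simple roots consists of all roots that have the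
same scalar products with these as `α i`; the orbit sizes are `240, 56, 27, 16, 10, 6, 2, 1`.
-/

section Freeness

open DirectSum

variable {k S : Type*} [Field k] [CommRing S] [Algebra k S]

/-- The Hilbert ideal of a subalgebra `R` of a graded algebra `S`: the ideal of `S` generated by
the homogeneous elements of `R` of positive degree. -/
def hilbertIdeal (𝒜 : ℕ → Submodule k S) (R : Subalgebra k S) : Ideal S :=
  Ideal.span {r | r ∈ R ∧ ∃ d, 0 < d ∧ r ∈ 𝒜 d}

/-- The exchange property of a subalgebra `R` of a graded algebra `S`, from which the freeness of
`S` over `R` is deduced: if `r • p` lies in `J • S` for an ideal `J` of `R` not containing `r`,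
then the homogeneous element `p` lies in the Hilbert ideal. -/
def HasExchangeProperty (𝒜 : ℕ → Submodule k S) (R : Subalgebra k S) : Prop :=
  ∀ (J : Ideal R) (r : R), r ∉ J → ∀ (n : ℕ), ∀ p ∈ 𝒜 n,
    (r : S) * p ∈ J.map (algebraMap R S) → p ∈ hilbertIdeal 𝒜 R

theorem linearIndependent_mk_update_add_mul {I : Ideal S} {ι : Type*} [DecidableEq ι] {p : ι → S}
    (hp : LinearIndependent k fun i => Ideal.Quotient.mk I (p i)) (i₀ : ι) {a : ι → S} {c : ι → k}
    (hac : ∀ i, a i - algebraMap k S (c i) ∈ I) :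
    LinearIndependent k fun i =>
      Ideal.Quotient.mk I (Function.update (fun i => p i + a i * p i₀) i₀ (p i₀) i) := by
  rw [← linearIndependent_add_smul_iff (Function.update_self i₀ 0 c)] at hp
  convert! hp using 2 with i
  rcases eq_or_ne i i₀ with rfl | hi
  · simp
  · have hci : Ideal.Quotient.mk I (a i) = algebraMap k (S ⧸ I) (c i) := Ideal.Quotient.eq.2 (hac i)
    simp [hi, hci, Algebra.smul_def]

variable {𝒜 : ℕ → Submodule k S} {R : Subalgebra k S}

theorem mem_hilbertIdeal_of_mem {r : S} (hr : r ∈ R) {d : ℕ} (hd : 0 < d) (hrd : r ∈ 𝒜 d) :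
    r ∈ hilbertIdeal 𝒜 R :=
  Ideal.subset_span ⟨hr, d, hd, hrd⟩

variable [GradedAlgebra 𝒜]

theorem hilbertIdeal_isHomogeneous : (hilbertIdeal 𝒜 R).IsHomogeneous 𝒜 :=
  Ideal.homogeneous_span 𝒜 _ fun _ ⟨_, d, _, hrd⟩ => ⟨d, hrd⟩

theorem exists_sub_algebraMap_mem_hilbertIdeal (h0 : 𝒜 0 ≤ 1)
    (hR : SetLike.IsHomogeneous 𝒜 R) {a : S} (ha : a ∈ R) :
    ∃ c : k, a - algebraMap k S c ∈ hilbertIdeal 𝒜 R := by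
  obtain ⟨c, hc⟩ := Submodule.mem_one.1 (h0 (decompose 𝒜 a 0).2)
  refine ⟨c, (hilbertIdeal_isHomogeneous.mem_iff).2 fun n => ?_⟩
  rw [decompose_sub, DirectSum.sub_apply, AddSubgroupClass.coe_sub, hc]
  rcases n.eq_zero_or_pos with rfl | hn
  · rw [decompose_of_mem_same 𝒜 (decompose 𝒜 a 0).2, sub_self]
    exact zero_mem _
  · rw [decompose_of_mem_ne 𝒜 (decompose 𝒜 a 0).2 hn.ne, sub_zero]
    exact mem_hilbertIdeal_of_mem (hR n ha) hn (decompose 𝒜 a n).2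

namespace HasExchangeProperty

theorem mem_hilbertIdeal (hex : HasExchangeProperty 𝒜 R) {s : Set R}
    (hs : ∀ a ∈ s, SetLike.IsHomogeneousElem 𝒜 (a : S)) {r : R}
    (hr : SetLike.IsHomogeneousElem 𝒜 (r : S)) (hrs : r ∉ Ideal.span s) {p : S}
    (hp : (r : S) * p ∈ (Ideal.span s).map (algebraMap R S)) : p ∈ hilbertIdeal 𝒜 R := by
  obtain ⟨d, hd⟩ := hr
  have hmap : ((Ideal.span s).map (algebraMap R S)).IsHomogeneous 𝒜 := by
    rw [Ideal.map_span]
    exact Ideal.homogeneous_span 𝒜 _ (Set.forall_mem_image.2 hs)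
  refine hilbertIdeal_isHomogeneous.mem_iff.2 fun n =>
    hex _ r hrs n _ (decompose 𝒜 p n).2 ?_
  rw [← coe_decompose_mul_add_of_left_mem 𝒜 hd]
  exact hmap _ hp

theorem eq_zero_of_sum_mul_eq_zero (hex : HasExchangeProperty 𝒜 R) (h0 : 𝒜 0 ≤ 1)
    (hR : SetLike.IsHomogeneous 𝒜 R) {ι : Type*} {r : ι → R}
    (hr : ∀ i, SetLike.IsHomogeneousElem 𝒜 (r i : S)) (s : Finset ι) (p : ι → S)
    (hp : LinearIndependent k fun i => Ideal.Quotient.mk (hilbertIdeal 𝒜 R) (p i))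
    (hsum : ∑ i ∈ s, (r i : S) * p i = 0) : ∀ i ∈ s, r i = 0 := by
  classical
  induction s using Finset.induction_on generalizing p with
  | empty => simp
  | insert i₀ s hi₀ ih =>
    rw [Finset.sum_insert hi₀] at hsum
    have hmem : r i₀ ∈ Ideal.span (r '' s) := by
      by_contra hnot
      refine hp.ne_zero i₀ (Ideal.Quotient.eq_zero_iff_mem.2 <|
        hex.mem_hilbertIdeal (Set.forall_mem_image.2 fun i _ => hr i) (hr i₀) hnot ?_)
      rw [eq_neg_of_add_eq_zero_left hsum]
      exact neg_mem <| sum_mem fun i hi => Ideal.mul_mem_right _ _ <|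
        Ideal.mem_map_of_mem (algebraMap R S) (Ideal.subset_span (Set.mem_image_of_mem r hi))
    -- Substituting `r i₀ = ∑ a i * r i` gives a relation among the `p i + a i * p i₀`. These are
    -- still independent modulo the Hilbert ideal, where `a i` acts as a scalar.
    obtain ⟨a, ha⟩ := Submodule.mem_span_image_finset_iff_exists_fun' R |>.1 hmem
    choose c hc using fun i => exists_sub_algebraMap_mem_hilbertIdeal h0 hR (a i).2
    let p' : ι → S := Function.update (fun i => p i + a i * p i₀) i₀ (p i₀)
    have hp' : LinearIndependent k fun i => Ideal.Quotient.mk (hilbertIdeal 𝒜 R) (p' i) :=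
      linearIndependent_mk_update_add_mul hp i₀ hc
    have hsum' : ∑ i ∈ s, (r i : S) * p' i = 0 := by
      calc ∑ i ∈ s, (r i : S) * p' i
          = ∑ i ∈ s, ((a i * r i : R) * p i₀ + r i * p i) :=
            Finset.sum_congr rfl fun i hi => by
              simp only [p', Function.update_of_ne (ne_of_mem_of_not_mem hi hi₀),
                MulMemClass.coe_mul]
              ring
        _ = r i₀ * p i₀ + ∑ i ∈ s, (r i : S) * p i := by
            rw [Finset.sum_add_distrib, ← Finset.sum_mul, ← AddSubmonoidClass.coe_finsetSum, ← ha]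
            rfl
        _ = 0 := hsum
    have hzero : ∀ i ∈ s, r i = 0 := ih p' hp' hsum'
    refine Finset.forall_mem_insert _ _ _ |>.2 ⟨?_, hzero⟩
    rw [← ha]
    exact Finset.sum_eq_zero fun i hi => by rw [hzero i hi, smul_zero]

theorem linearIndependent (hex : HasExchangeProperty 𝒜 R) (h0 : 𝒜 0 ≤ 1)
    (hR : SetLike.IsHomogeneous 𝒜 R) {ι : Type*} {p : ι → S} {e : ι → ℕ}
    (hpe : ∀ i, p i ∈ 𝒜 (e i))
    (hp : LinearIndependent k fun i => Ideal.Quotient.mk (hilbertIdeal 𝒜 R) (p i)) :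
    LinearIndependent R p := by
  refine linearIndependent_iff'.2 fun s r hsum i hi => ?_
  let ρ (n : ℕ) (j : ι) : R :=
    if e j ≤ n then ⟨GradedAlgebra.proj 𝒜 (n - e j) (r j), hR _ (r j).2⟩ else 0
  have hρ (n : ℕ) (j : ι) : SetLike.IsHomogeneousElem 𝒜 (ρ n j : S) := by
    simp only [ρ]
    split_ifs
    exacts [⟨n - e j, (decompose 𝒜 (r j : S) (n - e j)).2⟩, ⟨0, zero_mem _⟩]
  have hcomp (n : ℕ) : ∑ j ∈ s, (ρ n j : S) * p j = 0 := by
    have hn := congrArg (GradedAlgebra.proj 𝒜 n) hsum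
    rw [map_sum, map_zero] at hn
    rw [← hn]
    refine Finset.sum_congr rfl fun j _ => ?_
    rw [Subalgebra.smul_def, smul_eq_mul, GradedAlgebra.proj_apply,
      coe_decompose_mul_of_right_mem 𝒜 n (hpe j)]
    simp only [ρ]
    split_ifs
    exacts [rfl, zero_mul _]
  have hcoeff (n : ℕ) : GradedAlgebra.proj 𝒜 n (r i) = 0 := by
    have hρi : ρ (n + e i) i = 0 :=
      hex.eq_zero_of_sum_mul_eq_zero h0 hR (hρ _) s p hp (hcomp _) i hi
    simpa [ρ, -GradedAlgebra.proj_apply] using congrArg Subtype.val hρi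
  exact Subtype.ext <| (decompose 𝒜).injective <| DFinsupp.ext fun n => Subtype.ext <| by
    simpa using hcoeff n

end HasExchangeProperty

theorem decompose_mem_of_mem_hilbertIdeal {M : Submodule R S} {n : ℕ}
    (hM : ∀ m < n, ∀ f ∈ 𝒜 m, f ∈ M) {h : S} (hh : h ∈ hilbertIdeal 𝒜 R) :
    (decompose 𝒜 h n : S) ∈ M := by
  suffices h' : ∀ x, (decompose 𝒜 (x * h) n : S) ∈ M by simpa only [one_mul] using h' 1
  induction hh using Submodule.span_induction with
  | mem r hr =>
    obtain ⟨hrR, d, hd, hrd⟩ := hr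
    intro x
    rcases le_or_gt d n with hdn | hdn
    · rw [coe_decompose_mul_of_right_mem_of_le 𝒜 hrd hdn, mul_comm]
      exact M.smul_mem ⟨r, hrR⟩ (hM _ (by lia) _ (decompose 𝒜 x (n - d)).2)
    · rw [coe_decompose_mul_of_right_mem_of_not_le 𝒜 hrd hdn.not_ge]
      exact zero_mem M
  | zero => simp
  | add y z _ _ hy hz =>
    intro x
    rw [mul_add, decompose_add]
    exact add_mem (hy x) (hz x)
  | smul a y _ hy =>
    intro x
    rw [smul_eq_mul, ← mul_assoc]
    exact hy (x * a)

theorem span_range_eq_top {ι : Type*} {p : ι → S}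
    (hp : ∀ i, SetLike.IsHomogeneousElem 𝒜 (p i))
    (hspan : Submodule.span k (Set.range fun i => Ideal.Quotient.mk (hilbertIdeal 𝒜 R) (p i)) =
      ⊤) :
    Submodule.span R (Set.range p) = ⊤ := by
  set M := Submodule.span R (Set.range p)
  have hproj (n : ℕ) : Submodule.span k (Set.range p) ≤
      (M.restrictScalars k).comap (GradedAlgebra.proj 𝒜 n) := by
    refine Submodule.span_le.2 (Set.range_subset_iff.2 fun i => ?_)
    obtain ⟨d, hd⟩ := hp i
    change (decompose 𝒜 (p i) n : S) ∈ M
    rcases eq_or_ne d n with rfl | hdn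
    · rw [decompose_of_mem_same 𝒜 hd]
      exact Submodule.subset_span (Set.mem_range_self i)
    · rw [decompose_of_mem_ne 𝒜 hd hdn]
      exact zero_mem M
  have hM (n : ℕ) : ∀ f ∈ 𝒜 n, f ∈ M := by
    induction n using Nat.strong_induction_on with
    | _ n ih =>
      intro f hf
      have hfq : Ideal.Quotient.mkₐ k (hilbertIdeal 𝒜 R) f ∈
          (Submodule.span k (Set.range p)).map
            (Ideal.Quotient.mkₐ k (hilbertIdeal 𝒜 R)).toLinearMap := by
        rw [Submodule.map_span, ← Set.range_comp]
        exact hspan ▸ Submodule.mem_top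
      obtain ⟨q, hq, hqf⟩ := hfq
      have hdecomp := decompose_mem_of_mem_hilbertIdeal ih (Ideal.Quotient.eq.1 hqf.symm)
      rw [decompose_sub, DirectSum.sub_apply, AddSubgroupClass.coe_sub,
        decompose_of_mem_same 𝒜 hf] at hdecomp
      exact (M.sub_mem_iff_left (hproj n hq)).1 hdecomp
  refine eq_top_iff.2 fun f _ => ?_
  classical
  rw [← sum_support_decompose 𝒜 f]
  exact sum_mem fun n _ => hM n _ (decompose 𝒜 f n).2

theorem exists_homogeneous_basis_quotient (𝒜 : ℕ → Submodule k S) [GradedAlgebra 𝒜] (I : Ideal S) :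
    ∃ b ⊆ {f | SetLike.IsHomogeneousElem 𝒜 f}, LinearIndepOn k (Ideal.Quotient.mk I) b ∧
      Submodule.span k (Ideal.Quotient.mk I '' b) = ⊤ := by
  obtain ⟨b, hb, -, hspan, hli⟩ := exists_linearIndepOn_extension
    (linearIndepOn_empty k (Ideal.Quotient.mk I))
    (Set.empty_subset {f | SetLike.IsHomogeneousElem 𝒜 f})
  refine ⟨b, hb, hli, eq_top_iff.2 fun x _ => ?_⟩
  obtain ⟨f, rfl⟩ := Ideal.Quotient.mk_surjective x
  classical
  rw [← sum_support_decompose 𝒜 f, map_sum]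
  exact sum_mem fun n _ => hspan ⟨_, ⟨n, (decompose 𝒜 f n).2⟩, rfl⟩

theorem HasExchangeProperty.free (hex : HasExchangeProperty 𝒜 R) (h0 : 𝒜 0 ≤ 1)
    (hR : SetLike.IsHomogeneous 𝒜 R) : Module.Free R S := by
  obtain ⟨b, hb, hli, hspan⟩ := exists_homogeneous_basis_quotient 𝒜 (hilbertIdeal 𝒜 R)
  choose e he using fun f : b => hb f.2
  rw [Set.image_eq_range] at hspan
  exact .of_basis <| Module.Basis.mk (hex.linearIndependent h0 hR he hli)
    (span_range_eq_top (fun f : b => hb f.2) hspan).ge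

end Freeness

theorem exists_linearMap_mul_eq {R S : Type*} [CommRing R] [CommRing S] [IsDomain S] [Algebra R S]
    (φ : S →ₗ[R] S) {ℓ : S} (hℓ : ℓ ≠ 0) (hφ : ∀ f, ℓ ∣ φ f) :
    ∃ Δ : S →ₗ[R] S, ∀ f, φ f = ℓ * Δ f := by
  choose Δ hΔ using hφ
  refine ⟨⟨⟨Δ, fun f g => mul_left_cancel₀ hℓ ?_⟩, fun c f => mul_left_cancel₀ hℓ ?_⟩, hΔ⟩
  · rw [mul_add, ← hΔ, ← hΔ, ← hΔ, map_add]
  · rw [RingHom.id_apply, mul_smul_comm, ← hΔ, ← hΔ, map_smul]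

theorem map_mem_idealMap {R S : Type*} [CommRing R] [CommRing S] [Algebra R S]
    (φ : S →ₗ[R] S) {J : Ideal R} {f : S} (hf : f ∈ J.map (algebraMap R S)) :
    φ f ∈ J.map (algebraMap R S) := by
  have hle := Submodule.smul_top_le_comap_smul_top J φ
  rw [Ideal.smul_top_eq_map] at hle
  exact hle hf

open DirectSum in
theorem mem_graded_of_mul_mem {k S : Type*} [CommRing k] [CommRing S] [IsDomain S] [Algebra k S]
    {𝒜 : ℕ → Submodule k S} [GradedAlgebra 𝒜] {ℓ q : S} {i n : ℕ} (hℓ : ℓ ∈ 𝒜 i) (hℓ0 : ℓ ≠ 0)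
    (hq : ℓ * q ∈ 𝒜 (i + n)) : q ∈ 𝒜 n := by
  have h : ℓ * q = ℓ * decompose 𝒜 q n := by
    rw [← coe_decompose_mul_add_of_left_mem 𝒜 hℓ, decompose_of_mem_same 𝒜 hq]
  rw [mul_left_cancel₀ hℓ0 h]
  exact (decompose 𝒜 q n).2

section Chevalley

open DirectSum

variable {k S G : Type*} [Field k] [CommRing S] [Algebra k S] [Group G]
  [MulSemiringAction G S]

section Reynolds

variable [SMulCommClass G k S]

/-- The Reynolds operator of a finite group `G`: averaging over `G`, as a linear map over the
invariants. -/
def reynolds [Fintype G] : S →ₗ[FixedPoints.subalgebra k S G] FixedPoints.subalgebra k S G where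
  toFun f := ⟨(Fintype.card G : k)⁻¹ • ∑ g : G, g • f, fun h => by
    rw [smul_comm, Finset.smul_sum]
    simp only [← mul_smul]
    exact congrArg _ (Equiv.sum_comp (Equiv.mulLeft h) fun g => g • f)⟩
  map_add' f₁ f₂ := Subtype.ext <| by simp [smul_add, Finset.sum_add_distrib]
  map_smul' r f := Subtype.ext <| by
    simp only [smul_comm _ r f, ← Finset.smul_sum, smul_comm _ r (∑ g : G, g • f), RingHom.id_apply]
    rfl

theorem coe_reynolds [Fintype G] (f : S) :
    (reynolds (k := k) (G := G) f : S) = (Fintype.card G : k)⁻¹ • ∑ g : G, g • f :=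
  rfl

theorem reynolds_coe [Fintype G] (hcard : (Fintype.card G : k) ≠ 0)
    (r : FixedPoints.subalgebra k S G) : reynolds (r : S) = r := by
  refine Subtype.ext ?_
  rw [coe_reynolds, Finset.sum_congr rfl fun g _ => r.2 g, Finset.sum_const, Finset.card_univ,
    ← Nat.cast_smul_eq_nsmul k, inv_smul_smul₀ hcard]

theorem mem_of_coe_mem_idealMap [Fintype G] (hcard : (Fintype.card G : k) ≠ 0)
    {J : Ideal (FixedPoints.subalgebra k S G)} {r : FixedPoints.subalgebra k S G}
    (hr : (r : S) ∈ J.map (algebraMap _ S)) : r ∈ J := by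
  have hle := Submodule.smul_top_le_comap_smul_top J (reynolds (k := k) (G := G) (S := S))
  rw [Ideal.smul_top_eq_map, smul_eq_mul, Ideal.mul_top] at hle
  have hmem := hle hr
  rwa [Submodule.mem_comap, reynolds_coe hcard] at hmem

end Reynolds

variable {𝒜 : ℕ → Submodule k S}

/-- `s` acts on the graded algebra like a reflection: all differences `f - s • f` are divisible by
one nonzero element of degree one, the equation of the mirror of `s`. -/
def IsGradedReflection (𝒜 : ℕ → Submodule k S) (s : G) : Prop :=
  ∃ ℓ ∈ 𝒜 1, ℓ ≠ 0 ∧ ∀ f : S, ℓ ∣ f - s • f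

section HilbertIdeal

variable [SMulCommClass G k S]

theorem smul_mem_hilbertIdeal (g : G) {f : S}
    (hf : f ∈ hilbertIdeal 𝒜 (FixedPoints.subalgebra k S G)) :
    g • f ∈ hilbertIdeal 𝒜 (FixedPoints.subalgebra k S G) := by
  induction hf using Submodule.span_induction with
  | mem r hr => exact (hr.1 g).symm ▸ Ideal.subset_span hr
  | zero => rw [smul_zero]; exact zero_mem _
  | add x y _ _ hx hy => rw [smul_add]; exact add_mem hx hy
  | smul a x _ hx => rw [smul_eq_mul, smul_mul']; exact Ideal.mul_mem_left _ _ hx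

theorem sub_smul_mem_hilbertIdeal {T : Set G} {f : S}
    (hf : ∀ s ∈ T, f - s • f ∈ hilbertIdeal 𝒜 (FixedPoints.subalgebra k S G)) {g : G}
    (hg : g ∈ Subgroup.closure T) :
    f - g • f ∈ hilbertIdeal 𝒜 (FixedPoints.subalgebra k S G) := by
  induction hg using Subgroup.closure_induction with
  | mem s hs => exact hf s hs
  | one => rw [one_smul, sub_self]; exact zero_mem _
  | mul x y _ _ hx hy =>
    rw [show f - (x * y) • f = (f - x • f) + x • (f - y • f) by rw [mul_smul, smul_sub]; abel]
    exact add_mem hx (smul_mem_hilbertIdeal x hy)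
  | inv x _ hx =>
    rw [show f - x⁻¹ • f = - (x⁻¹ • (f - x • f)) by rw [smul_sub, inv_smul_smul]; abel]
    exact neg_mem (smul_mem_hilbertIdeal x⁻¹ hx)

theorem mem_hilbertIdeal_of_sub_smul_mem [Fintype G] (hcard : (Fintype.card G : k) ≠ 0)
    (hG : ∀ (g : G) (n : ℕ), ∀ f ∈ 𝒜 n, g • f ∈ 𝒜 n) {n : ℕ} (hn : 0 < n) {p : S} (hp : p ∈ 𝒜 n)
    (hsub : ∀ g : G, p - g • p ∈ hilbertIdeal 𝒜 (FixedPoints.subalgebra k S G)) :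
    p ∈ hilbertIdeal 𝒜 (FixedPoints.subalgebra k S G) := by
  have hreynolds : (reynolds (k := k) (G := G) p : S) ∈ 𝒜 n :=
    Submodule.smul_mem _ _ (sum_mem fun g _ => hG g n p hp)
  have hdiff : p - reynolds (k := k) (G := G) p =
      (Fintype.card G : k)⁻¹ • ∑ g : G, (p - g • p) := by
    rw [coe_reynolds, Finset.sum_sub_distrib, smul_sub, Finset.sum_const, Finset.card_univ,
      ← Nat.cast_smul_eq_nsmul k, inv_smul_smul₀ hcard]
  have hmem := (hilbertIdeal 𝒜 (FixedPoints.subalgebra k S G)).smul_of_tower_mem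
    (Fintype.card G : k)⁻¹ (sum_mem fun g (_ : g ∈ Finset.univ) => hsub g)
  rw [← hdiff] at hmem
  exact (Submodule.sub_mem_iff_left _
    (mem_hilbertIdeal_of_mem (Subtype.prop _) hn hreynolds)).1 hmem

end HilbertIdeal

variable [GradedAlgebra 𝒜]

theorem coe_decompose_smul (hG : ∀ (g : G) (n : ℕ), ∀ f ∈ 𝒜 n, g • f ∈ 𝒜 n) (g : G) (f : S)
    (n : ℕ) : (decompose 𝒜 (g • f) n : S) = g • (decompose 𝒜 f n : S) := by
  induction f using Decomposition.inductionOn 𝒜 with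
  | zero => simp
  | @homogeneous m f =>
    rcases eq_or_ne m n with rfl | hmn
    · rw [decompose_of_mem_same 𝒜 (hG g m f f.2), decompose_of_mem_same 𝒜 f.2]
    · rw [decompose_of_mem_ne 𝒜 (hG g m f f.2) hmn, decompose_of_mem_ne 𝒜 f.2 hmn, smul_zero]
  | add f₁ f₂ h₁ h₂ =>
    rw [smul_add, decompose_add, decompose_add]
    simp [h₁, h₂]

variable [SMulCommClass G k S]

theorem fixedPoints_isHomogeneous (hG : ∀ (g : G) (n : ℕ), ∀ f ∈ 𝒜 n, g • f ∈ 𝒜 n) :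
    SetLike.IsHomogeneous 𝒜 (FixedPoints.subalgebra k S G) := fun n f hf g => by
  rw [← coe_decompose_smul hG, hf g]

variable [IsDomain S]

theorem IsGradedReflection.exists_dividedDifference
    (hG : ∀ (g : G) (n : ℕ), ∀ f ∈ 𝒜 n, g • f ∈ 𝒜 n) {s : G} (hs : IsGradedReflection 𝒜 s) :
    ∃ ℓ ∈ 𝒜 1, ∃ Δ : S →ₗ[FixedPoints.subalgebra k S G] S,
      (∀ f, f - s • f = ℓ * Δ f) ∧ ∀ n, ∀ f ∈ 𝒜 (n + 1), Δ f ∈ 𝒜 n := by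
  obtain ⟨ℓ, hℓ, hℓ0, hdvd⟩ := hs
  obtain ⟨Δ, hΔ⟩ := exists_linearMap_mul_eq
    (LinearMap.id - DistribSMul.toLinearMap (FixedPoints.subalgebra k S G) S s) hℓ0 hdvd
  refine ⟨ℓ, hℓ, Δ, hΔ, fun n f hf => mem_graded_of_mul_mem hℓ hℓ0 ?_⟩
  rw [← hΔ, add_comm]
  exact sub_mem hf (hG s _ f hf)

theorem hasExchangeProperty_fixedPoints [Fintype G] (hcard : (Fintype.card G : k) ≠ 0)
    (h0 : 𝒜 0 ≤ 1) (hG : ∀ (g : G) (n : ℕ), ∀ f ∈ 𝒜 n, g • f ∈ 𝒜 n) {T : Set G}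
    (hT : Subgroup.closure T = ⊤) (hrefl : ∀ s ∈ T, IsGradedReflection 𝒜 s) :
    HasExchangeProperty 𝒜 (FixedPoints.subalgebra k S G) := by
  intro J r hr n
  induction n with
  | zero =>
    intro p hp hrp
    obtain ⟨c, rfl⟩ := Submodule.mem_one.1 (h0 hp)
    rcases eq_or_ne c 0 with rfl | hc
    · rw [map_zero]
      exact zero_mem _
    · refine absurd (mem_of_coe_mem_idealMap hcard ?_) hr
      have hmem := Ideal.mul_mem_right (algebraMap k S c⁻¹) _ hrp
      rwa [mul_assoc, ← map_mul, mul_inv_cancel₀ hc, map_one, mul_one] at hmem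
  | succ n ih =>
    intro p hp hrp
    refine mem_hilbertIdeal_of_sub_smul_mem hcard hG n.succ_pos hp fun g =>
      sub_smul_mem_hilbertIdeal (T := T) (fun s hs => ?_) (hT ▸ Subgroup.mem_top g)
    obtain ⟨ℓ, -, Δ, hΔ, hdeg⟩ := (hrefl s hs).exists_dividedDifference hG
    rw [hΔ]
    refine Ideal.mul_mem_left _ _ (ih _ (hdeg n p hp) ?_)
    have hmem := map_mem_idealMap Δ hrp
    rwa [← smul_eq_mul, ← Subalgebra.smul_def, map_smul] at hmem

theorem free_fixedPoints_of_isGradedReflection [Fintype G] (hcard : (Fintype.card G : k) ≠ 0)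
    (h0 : 𝒜 0 ≤ 1) (hG : ∀ (g : G) (n : ℕ), ∀ f ∈ 𝒜 n, g • f ∈ 𝒜 n) {T : Set G}
    (hT : Subgroup.closure T = ⊤) (hrefl : ∀ s ∈ T, IsGradedReflection 𝒜 s) :
    Module.Free (FixedPoints.subalgebra k S G) S :=
  (hasExchangeProperty_fixedPoints hcard h0 hG hT hrefl).free h0 (fixedPoints_isHomogeneous hG)

end Chevalley

attribute [local instance] FractionRing.liftAlgebra in
theorem rank_eq_natCard_of_isGaloisGroup (G A B : Type*) [CommRing A] [IsDomain A] [CommRing B]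
    [IsDomain B] [Algebra A B] [FaithfulSMul A B] [Group G] [Finite G] [MulSemiringAction G B]
    [hG : IsGaloisGroup G A B] : Module.rank A B = Nat.card G := by
  have : Algebra.IsIntegral A B := hG.isInvariant.isIntegral
  have : Algebra.IsAlgebraic A B := Algebra.IsIntegral.isAlgebraic
  rw [← Algebra.IsAlgebraic.rank_fractionRing A B]
  let := IsFractionRing.mulSemiringAction G B (FractionRing B)
  have := IsGaloisGroup.finiteDimensional G (FractionRing A) (FractionRing B)
  rw [← Module.finrank_eq_rank, IsGaloisGroup.card_eq_finrank G (FractionRing A) (FractionRing B)]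

theorem rank_fixedPoints {k S G : Type*} [CommRing k] [CommRing S] [IsDomain S] [Algebra k S]
    [Group G] [Finite G] [MulSemiringAction G S] [SMulCommClass G k S] [FaithfulSMul G S] :
    Module.rank (FixedPoints.subalgebra k S G) S = Nat.card G := by
  have : IsGaloisGroup G (FixedPoints.subalgebra k S G) S :=
    { faithful := inferInstance
      commutes := inferInstance
      isInvariant := ⟨fun f hf => ⟨⟨f, hf⟩, rfl⟩⟩ }
  exact rank_eq_natCard_of_isGaloisGroup G _ S

section OrbitChain

open MulAction

variable {G X : Type*} [Group G] [MulAction G X]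

theorem natCard_fixingSubgroup_insert (a : X) (s : Set X) :
    Nat.card (fixingSubgroup G s) =
      Nat.card (fixingSubgroup G (insert a s)) * (orbit (fixingSubgroup G s) a).ncard := by
  have hle : fixingSubgroup G (insert a s) ≤ fixingSubgroup G s :=
    fixingSubgroup_antitone G X (Set.subset_insert a s)
  have hstab : stabilizer (fixingSubgroup G s) a =
      (fixingSubgroup G (insert a s)).subgroupOf (fixingSubgroup G s) := by
    ext g
    simp only [mem_stabilizer_iff, Subgroup.mem_subgroupOf, mem_fixingSubgroup_iff,
      Set.forall_mem_insert]
    exact (and_iff_left ((mem_fixingSubgroup_iff G).1 g.2)).symm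
  rw [← index_stabilizer, hstab, ← Nat.card_congr (Subgroup.subgroupOfEquivOfLe hle).toEquiv,
    Subgroup.card_mul_index]

theorem natCard_eq_natCard_fixingSubgroup_mul_prod {ι : Type*} [LinearOrder ι] (b : ι → X)
    (s : Finset ι) :
    Nat.card G = Nat.card (fixingSubgroup G (b '' s)) *
      ∏ i ∈ s, (orbit (fixingSubgroup G (b '' {j | j ∈ s ∧ i < j})) (b i)).ncard := by
  induction s using Finset.induction_on_min with
  | empty => simp
  | insert i s hi ih =>
    have his : i ∉ s := fun h => (hi i h).false
    have hmin : {j | j ∈ insert i s ∧ i < j} = s := by grind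
    have hne (k : ι) (hk : k ∈ s) : {j | j ∈ insert i s ∧ k < j} = {j | j ∈ s ∧ k < j} := by grind
    rw [Finset.prod_insert his, hmin, Finset.prod_congr rfl fun k hk => by rw [hne k hk],
      ← mul_assoc, Finset.coe_insert, Set.image_insert_eq, ← natCard_fixingSubgroup_insert, ih]

theorem natCard_eq_natCard_fixingSubgroup_range_mul_prod {ι : Type*} [LinearOrder ι] [Fintype ι]
    (b : ι → X) :
    Nat.card G = Nat.card (fixingSubgroup G (Set.range b)) *
      ∏ i, (orbit (fixingSubgroup G (b '' Set.Ioi i)) (b i)).ncard := by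
  have huniv (i : ι) : {j | j ∈ Finset.univ ∧ i < j} = Set.Ioi i := by grind
  rw [natCard_eq_natCard_fixingSubgroup_mul_prod b Finset.univ, Finset.coe_univ, Set.image_univ,
    Finset.prod_congr rfl fun i _ => by rw [huniv i]]

end OrbitChain

section ReflectionVectors

open MulAction

variable {K V G : Type*} [CommRing K] [AddCommGroup V] [Module K V] [Group G]
  [DistribMulAction G V]

variable (G) in
/-- The vectors `β` such that the reflection `v ↦ v - B β v • β` is induced by an element of
`G`. -/
def reflectionVectors (B : LinearMap.BilinForm K V) : Set V :=
  {β | ∃ g : G, ∀ v, g • v = v - B β v • β}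

variable {B : LinearMap.BilinForm K V}

theorem exists_smul_eq_and_fixes {x y : V} (hxy : x - y ∈ reflectionVectors G B)
    (hx : B x x = 2) (hyx : B y x = 1) : ∃ g : G, g • x = y ∧ ∀ v, B x v = B y v → g • v = v := by
  obtain ⟨g, hg⟩ := hxy
  refine ⟨g, ?_, fun v hv => ?_⟩
  · rw [hg, map_sub, LinearMap.sub_apply, hx, hyx]
    module
  · rw [hg, map_sub, LinearMap.sub_apply, hv, sub_self, zero_smul, sub_zero]

theorem neg_mem_reflectionVectors {β : V} (hβ : β ∈ reflectionVectors G B) :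
    -β ∈ reflectionVectors G B := by
  obtain ⟨g, hg⟩ := hβ
  refine ⟨g, fun v => ?_⟩
  rw [hg, map_neg, LinearMap.neg_apply, neg_smul_neg]

variable [SMulCommClass G K V]

theorem smul_mem_reflectionVectors (hB : ∀ (g : G) (x y : V), B (g • x) (g • y) = B x y) (g : G)
    {β : V} (hβ : β ∈ reflectionVectors G B) : g • β ∈ reflectionVectors G B := by
  obtain ⟨s, hs⟩ := hβ
  refine ⟨g * s * g⁻¹, fun v => ?_⟩
  have hBv : B β (g⁻¹ • v) = B (g • β) v := by rw [← hB g, smul_inv_smul]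
  rw [mul_smul, mul_smul, hs, smul_sub, smul_inv_smul, smul_comm, hBv]

theorem sub_mem_reflectionVectors (hB : ∀ (g : G) (x y : V), B (g • x) (g • y) = B x y) {x y : V}
    (hx : x ∈ reflectionVectors G B) (hy : y ∈ reflectionVectors G B) (hyx : B y x = 1) :
    x - y ∈ reflectionVectors G B := by
  obtain ⟨s, hs⟩ := hy
  have hsx : s • x = x - y := by rw [hs, hyx, one_smul]
  exact hsx ▸ smul_mem_reflectionVectors hB s hx

theorem orbit_fixingSubgroup_eq [LinearOrder K]
    (hB : ∀ (g : G) (x y : V), B (g • x) (g • y) = B x y) {Φ : Set V} (hfin : Φ.Finite)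
    (hΦ : ∀ (g : G), ∀ r ∈ Φ, g • r ∈ Φ) (hrefl : Φ ⊆ reflectionVectors G B)
    (hnorm : ∀ r ∈ Φ, B r r = 2) {s : Set V} {a : V} (ha : a ∈ Φ)
    (hascent : ∀ r ∈ {r ∈ Φ | ∀ b ∈ s, B r b = B a b}, r ≠ a →
      ∃ t ∈ {r ∈ Φ | ∀ b ∈ s, B r b = B a b}, B r a < B t a ∧ B t r = 1) :
    orbit (fixingSubgroup G s) a = {r ∈ Φ | ∀ b ∈ s, B r b = B a b} := by
  refine Set.Subset.antisymm ?_ fun r hr => ?_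
  · rintro _ ⟨g, rfl⟩
    refine ⟨hΦ g a ha, fun b hb => ?_⟩
    have hgb : (g : G) • b = b := (mem_fixingSubgroup_iff G).1 g.2 b hb
    calc B ((g : G) • a) b = B ((g : G) • a) ((g : G) • b) := by rw [hgb]
      _ = B a b := hB g a b
  · by_contra hnot
    obtain ⟨m, ⟨hm, hmorbit⟩, hmax⟩ := Set.exists_max_image
      {r ∈ {r ∈ Φ | ∀ b ∈ s, B r b = B a b} | r ∉ orbit (fixingSubgroup G s) a} (fun r => B r a)
      (hfin.subset fun r hr => hr.1.1) ⟨r, hr, hnot⟩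
    obtain ⟨t, ht, hlt, htm⟩ := hascent m hm fun h => hmorbit (h ▸ mem_orbit_self m)
    -- By maximality `t` lies in the orbit, and the reflection along `m - t` carries `m` to `t`.
    have htorbit : t ∈ orbit (fixingSubgroup G s) a := by
      by_contra htorbit
      exact (hmax t ⟨ht, htorbit⟩).not_gt hlt
    obtain ⟨g, hgm, hgfix⟩ := exists_smul_eq_and_fixes
      (sub_mem_reflectionVectors hB (hrefl hm.1) (hrefl ht.1) htm) (hnorm m hm.1) htm
    have hg : g ∈ fixingSubgroup G s := (mem_fixingSubgroup_iff G).2 fun b hb =>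
      hgfix b ((hm.2 b hb).trans (ht.2 b hb).symm)
    have hgm' : (⟨g, hg⟩ : fixingSubgroup G s) • m = t := hgm
    rw [← orbit_eq_iff, ← hgm', orbit_smul, orbit_eq_iff] at htorbit
    exact hmorbit htorbit

end ReflectionVectors

theorem dvd_sub_algHom_of_dvd_X_sub {σ R : Type*} [CommRing R]
    (φ : MvPolynomial σ R →ₐ[R] MvPolynomial σ R) {ℓ : MvPolynomial σ R}
    (hφ : ∀ i, ℓ ∣ X i - φ (X i)) (f : MvPolynomial σ R) : ℓ ∣ f - φ f := by
  have hmk : Ideal.Quotient.mkₐ R (Ideal.span {ℓ}) =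
      (Ideal.Quotient.mkₐ R (Ideal.span {ℓ})).comp φ :=
    MvPolynomial.algHom_ext fun i =>
      Ideal.Quotient.eq.2 (Ideal.mem_span_singleton.2 (hφ i))
  exact Ideal.mem_span_singleton.1 (Ideal.Quotient.eq.1 (DFunLike.congr_fun hmk f))

theorem linearForm_mem_homogeneousSubmodule {σ R : Type*} [CommSemiring R] [Fintype σ] (c : σ → R) :
    ∑ j, C (c j) * X j ∈ homogeneousSubmodule σ R 1 :=
  sum_mem fun j _ => isHomogeneous_C_mul_X (c j) j

section PolynomialAction

theorem polyAct_X (g : (Module.End ℚ (Fin 8 → ℚ))ˣ) (i : Fin 8) :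
    polyAct g (X i) = ∑ j, C ((g⁻¹ • Pi.single j 1 : Fin 8 → ℚ) i) * X j :=
  aeval_X _ i

theorem eval_polyAct (g : (Module.End ℚ (Fin 8 → ℚ))ˣ) (v : Fin 8 → ℚ)
    (f : MvPolynomial (Fin 8) ℚ) : eval v (polyAct g f) = eval (g⁻¹ • v) f := by
  suffices h : (aeval v).comp (polyAct g) = aeval (g⁻¹ • v) from DFunLike.congr_fun h f
  ext i
  have hv : g⁻¹ • v = ∑ j, v j • g⁻¹ • (Pi.single j 1 : Fin 8 → ℚ) := by
    conv_lhs => rw [pi_eq_sum_univ' v, Finset.smul_sum]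
    simp only [smul_comm g⁻¹]
  rw [hv]
  simp [polyAct_X, mul_comm]

/-- `polyAct` is a left action because it substitutes `g⁻¹`. -/
noncomputable instance polyMulSemiringAction :
    MulSemiringAction (Module.End ℚ (Fin 8 → ℚ))ˣ (MvPolynomial (Fin 8) ℚ) where
  smul g := polyAct g
  one_smul f := MvPolynomial.funext fun v => by
    change eval v (polyAct 1 f) = _
    rw [eval_polyAct, inv_one, one_smul]
  mul_smul g h f := MvPolynomial.funext fun v => by
    change eval v (polyAct (g * h) f) = eval v (polyAct g (polyAct h f))
    simp only [eval_polyAct, mul_inv_rev, mul_smul]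
  smul_zero g := map_zero (polyAct g)
  smul_add g := map_add (polyAct g)
  smul_one g := map_one (polyAct g)
  smul_mul g := map_mul (polyAct g)

theorem smul_eq_polyAct (g : (Module.End ℚ (Fin 8 → ℚ))ˣ) (f : MvPolynomial (Fin 8) ℚ) :
    g • f = polyAct g f :=
  rfl

instance : SMulCommClass (Module.End ℚ (Fin 8 → ℚ))ˣ ℚ (MvPolynomial (Fin 8) ℚ) where
  smul_comm g c f := map_smul (polyAct g) c f

instance : FaithfulSMul (Module.End ℚ (Fin 8 → ℚ))ˣ (MvPolynomial (Fin 8) ℚ) where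
  eq_of_smul_eq_smul {g h} hgh := by
    refine inv_injective (Units.ext (LinearMap.ext fun v => funext fun i => ?_))
    have hX := congrArg (eval v) (hgh (X i))
    rwa [smul_eq_polyAct, smul_eq_polyAct, eval_polyAct, eval_polyAct, eval_X, eval_X] at hX

theorem smul_mem_homogeneousSubmodule (g : (Module.End ℚ (Fin 8 → ℚ))ˣ) (n : ℕ) :
    ∀ f ∈ homogeneousSubmodule (Fin 8) ℚ n, g • f ∈ homogeneousSubmodule (Fin 8) ℚ n := by
  intro f hf
  have h := IsHomogeneous.aeval (n := 1) hf _ fun i =>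
    linearForm_mem_homogeneousSubmodule fun j => (g⁻¹ • Pi.single j 1 : Fin 8 → ℚ) i
  rwa [one_mul] at h

theorem invSubalgebra_eq_fixedPoints :
    invSubalgebra = FixedPoints.subalgebra ℚ (MvPolynomial (Fin 8) ℚ) WeylE8 := by
  ext f
  simp only [invSubalgebra, Algebra.mem_iInf, AlgHom.mem_equalizer]
  exact ⟨fun h g => h g g.2, fun h g hg => h ⟨g, hg⟩⟩

theorem isGradedReflection_of_inv_smul_eq {g : (Module.End ℚ (Fin 8 → ℚ))ˣ}
    {φ : Module.Dual ℚ (Fin 8 → ℚ)} (hφ : φ ≠ 0) {β : Fin 8 → ℚ}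
    (hg : ∀ v, g⁻¹ • v = v - φ v • β) :
    IsGradedReflection (homogeneousSubmodule (Fin 8) ℚ) g := by
  set ℓ : MvPolynomial (Fin 8) ℚ := ∑ j, C (φ (Pi.single j 1)) * X j
  have hℓ (v : Fin 8 → ℚ) : eval v ℓ = φ v := by
    conv_rhs => rw [pi_eq_sum_univ' v, map_sum]
    simp [ℓ, mul_comm]
  refine ⟨ℓ, linearForm_mem_homogeneousSubmodule _, fun h => hφ ?_,
    dvd_sub_algHom_of_dvd_X_sub (polyAct g) fun k => ⟨C (β k), MvPolynomial.funext fun v => ?_⟩⟩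
  · refine LinearMap.ext fun v => ?_
    rw [← hℓ, h, map_zero, LinearMap.zero_apply]
  · simp [eval_polyAct, hg, hℓ]

end PolynomialAction

section RootsE8

open Matrix

/-- The positive roots of `E₈` in terms of the simple roots, in Bourbaki's notation: the decimal
digits of a code, with leading zeros up to length eight, are the coefficients of `α₁, …, α₈`. -/
def posRootCodes : List ℕ :=
  [1, 10, 11, 100, 110, 111, 1000, 1100, 1110, 1111, 10000, 11000, 11100, 11110, 11111, 100000,
   110000, 111000, 111100, 111110, 111111, 1000000, 1010000, 1011000, 1011100, 1011110, 1011111,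
   1110000, 1111000, 1111100, 1111110, 1111111, 1121000, 1121100, 1121110, 1121111, 1122100,
   1122110, 1122111, 1122210, 1122211, 1122221, 10000000, 10100000, 10110000, 10111000, 10111100,
   10111110, 10111111, 11110000, 11111000, 11111100, 11111110, 11111111, 11121000, 11121100,
   11121110, 11121111, 11122100, 11122110, 11122111, 11122210, 11122211, 11122221, 11221000,
   11221100, 11221110, 11221111, 11222100, 11222110, 11222111, 11222210, 11222211, 11222221,
   11232100, 11232110, 11232111, 11232210, 11232211, 11232221, 11233210, 11233211, 11233221,
   11233321, 12232100, 12232110, 12232111, 12232210, 12232211, 12232221, 12233210, 12233211,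
   12233221, 12233321, 12243210, 12243211, 12243221, 12243321, 12244321, 12343210, 12343211,
   12343221, 12343321, 12344321, 12354321, 13354321, 22343210, 22343211, 22343221, 22343321,
   22344321, 22354321, 22454321, 23354321, 23454321, 23464321, 23465321, 23465421, 23465431,
   23465432]

/-- The vector whose coordinates are the last eight decimal digits of a natural number. -/
def rootOfCode (c : ℕ) : Fin 8 → ℤ := fun i => (c / 10 ^ (7 - i : ℕ) % 10 : ℕ)

/-- The integer with given decimal digits: a left inverse of `rootOfCode` on `posRootCodes`, used to
compare roots quickly. -/
def codeOfRoot (x : Fin 8 → ℤ) : ℤ := ∑ i, x i * 10 ^ (7 - i : ℕ)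

/-- The positive roots of `E₈` in the basis of simple roots. -/
def posRootsE8 : List (Fin 8 → ℤ) := posRootCodes.map rootOfCode

/-- The roots of `E₈` in the basis of simple roots. -/
def rootsE8 : List (Fin 8 → ℤ) := posRootsE8 ++ posRootsE8.map (- ·)

/-- The weight coordinates of a vector of the root lattice, its scalar products with the simple
roots. -/
def weightE8 (x : Fin 8 → ℤ) : Fin 8 → ℤ := CartanMatrix.E₈ *ᵥ x

/-- The roots having the same scalar products as `α i` with `α j` for all `j > i`. -/
def chainRootsE8 (i : Fin 8) : List (Fin 8 → ℤ) :=
  rootsE8.filter fun x => ∀ j, i < j → weightE8 x j = CartanMatrix.E₈ i j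

section Enumeration

set_option maxRecDepth 100000

theorem nodup_codeOfRoot_rootsE8 : (rootsE8.map codeOfRoot).Nodup := by
  decide +kernel

theorem single_mem_posRootsE8 : ∀ i, Pi.single i 1 ∈ posRootsE8 := by
  decide +kernel

theorem dotProduct_weightE8_self_of_pos : ∀ x ∈ posRootsE8, x ⬝ᵥ weightE8 x = 2 := by
  decide +kernel

theorem exists_weightE8_pos : ∀ x ∈ posRootsE8, ∃ i, 0 < weightE8 x i := by
  decide +kernel

theorem length_chainRootsE8 :
    ∀ i, (chainRootsE8 i).length = ![1, 2, 6, 10, 16, 27, 56, 240] i := by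
  decide +kernel

theorem exists_ascent_chainRootsE8 : ∀ i, ∀ x ∈ chainRootsE8 i, x = Pi.single i 1 ∨
    ∃ y ∈ chainRootsE8 i, weightE8 x i < weightE8 y i ∧ y ⬝ᵥ weightE8 x = 1 := by
  decide +kernel

theorem codeOfRoot_reflect_mem : ∀ x ∈ posRootsE8, ∀ i, weightE8 x i = 0 ∨ x = Pi.single i 1 ∨
    (codeOfRoot (x - weightE8 x i • Pi.single i 1)).toNat ∈ posRootCodes ∧
      rootOfCode (codeOfRoot (x - weightE8 x i • Pi.single i 1)).toNat =
        x - weightE8 x i • Pi.single i 1 := by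
  decide +kernel

end Enumeration

theorem reflect_mem_posRootsE8 {x : Fin 8 → ℤ} (hx : x ∈ posRootsE8) {i : Fin 8}
    (hxi : x ≠ Pi.single i 1) : x - weightE8 x i • Pi.single i 1 ∈ posRootsE8 := by
  rcases codeOfRoot_reflect_mem x hx i with h0 | h1 | ⟨hcode, hroot⟩
  · rwa [h0, zero_smul, sub_zero]
  · exact absurd h1 hxi
  · exact List.mem_map.2 ⟨_, hcode, hroot⟩

theorem mem_rootsE8 {x : Fin 8 → ℤ} : x ∈ rootsE8 ↔ x ∈ posRootsE8 ∨ -x ∈ posRootsE8 := by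
  simp [rootsE8, neg_eq_iff_eq_neg]

theorem neg_mem_rootsE8 {x : Fin 8 → ℤ} (hx : x ∈ rootsE8) : -x ∈ rootsE8 := by
  rw [mem_rootsE8, neg_neg, or_comm]
  exact mem_rootsE8.1 hx

theorem weightE8_neg (x : Fin 8 → ℤ) : weightE8 (-x) = -weightE8 x :=
  mulVec_neg _ _

theorem weightE8_single (i : Fin 8) : weightE8 (Pi.single i 1) = CartanMatrix.E₈.col i :=
  mulVec_single_one _ _

theorem reflect_mem_rootsE8 {x : Fin 8 → ℤ} (hx : x ∈ rootsE8) (i : Fin 8) :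
    x - weightE8 x i • Pi.single i 1 ∈ rootsE8 := by
  have hpos {y : Fin 8 → ℤ} (hy : y ∈ posRootsE8) :
      y - weightE8 y i • Pi.single i 1 ∈ rootsE8 := by
    rcases eq_or_ne y (Pi.single i 1) with rfl | hyi
    · have h2 : weightE8 (Pi.single i 1) i = 2 := by
        rw [weightE8_single]
        exact CartanMatrix.E₈_diag i
      rw [h2, two_smul, sub_add_cancel_left]
      exact neg_mem_rootsE8 (mem_rootsE8.2 (.inl hy))
    · exact mem_rootsE8.2 (.inl (reflect_mem_posRootsE8 hy hyi))
  rcases mem_rootsE8.1 hx with h | h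
  · exact hpos h
  · have hneg := neg_mem_rootsE8 (hpos h)
    rwa [weightE8_neg, Pi.neg_apply, neg_smul, sub_neg_eq_add, neg_add, neg_neg,
      ← sub_eq_add_neg] at hneg

theorem dotProduct_weightE8_self {x : Fin 8 → ℤ} (hx : x ∈ rootsE8) : x ⬝ᵥ weightE8 x = 2 := by
  rcases mem_rootsE8.1 hx with h | h
  · exact dotProduct_weightE8_self_of_pos x h
  · have hneg := dotProduct_weightE8_self_of_pos _ h
    rwa [weightE8_neg, neg_dotProduct_neg] at hneg

end RootsE8

section WeylGroupE8

open Matrix MulAction Pointwise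

theorem cartanE8_eq_map : cartanE8 = CartanMatrix.E₈.map Int.cast := by
  ext i j
  fin_cases i <;> fin_cases j <;> simp [cartanE8, CartanMatrix.E₈]

theorem cartanE8_isSymm : cartanE8.IsSymm := by
  rw [cartanE8_eq_map]
  exact CartanMatrix.E₈_isSymm.map _

/-- The simple root `α i`, a standard basis vector. -/
abbrev simpleRootE8 (i : Fin 8) : Fin 8 → ℚ := Pi.single i 1

/-- The `W(E₈)`-invariant scalar product, with Gram matrix the Cartan matrix on the simple
roots. -/
noncomputable def formE8 : LinearMap.BilinForm ℚ (Fin 8 → ℚ) := Matrix.toBilin' cartanE8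

/-- The inclusion of the root lattice `ℤ⁸` in `ℚ⁸`. -/
def latticeInclE8 : (Fin 8 → ℤ) →+ (Fin 8 → ℚ) := (Int.castAddHom ℚ).compLeft (Fin 8)

theorem latticeInclE8_injective : Function.Injective latticeInclE8 :=
  Int.cast_injective.comp_left

theorem latticeInclE8_single (i : Fin 8) : latticeInclE8 (Pi.single i 1) = simpleRootE8 i := by
  ext j
  simp [latticeInclE8, Pi.single_apply, apply_ite]

theorem formE8_latticeInclE8 (x y : Fin 8 → ℤ) :
    formE8 (latticeInclE8 x) (latticeInclE8 y) = (x ⬝ᵥ weightE8 y : ℤ) := by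
  have hweight : Int.castRingHom ℚ ∘ weightE8 y =
      CartanMatrix.E₈.map (Int.castRingHom ℚ) *ᵥ (Int.castRingHom ℚ ∘ y) :=
    funext fun i => RingHom.map_mulVec (Int.castRingHom ℚ) _ y i
  rw [formE8, Matrix.toBilin'_apply', cartanE8_eq_map, ← eq_intCast (Int.castRingHom ℚ),
    RingHom.map_dotProduct, hweight]
  rfl

theorem formE8_comm (v w : Fin 8 → ℚ) : formE8 v w = formE8 w v :=
  (Matrix.isSymm_toBilin'_iff_isSymm.2 cartanE8_isSymm).eq v w

theorem formE8_simpleRootE8 (i : Fin 8) : formE8 (simpleRootE8 i) = phiE8 i := by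
  refine LinearMap.ext fun v => ?_
  rw [formE8_comm, phiE8_apply, formE8, Matrix.toBilin'_apply', mulVec_single_one, dotProduct_comm]
  rfl

theorem formE8_simpleRootE8_latticeInclE8 (i : Fin 8) (x : Fin 8 → ℤ) :
    formE8 (simpleRootE8 i) (latticeInclE8 x) = weightE8 x i := by
  rw [← latticeInclE8_single, formE8_latticeInclE8, single_one_dotProduct]

theorem formE8_simpleRootE8_simpleRootE8 (i j : Fin 8) :
    formE8 (simpleRootE8 i) (simpleRootE8 j) = CartanMatrix.E₈ i j := by
  rw [formE8, Matrix.toBilin'_single, cartanE8_eq_map, map_apply]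

theorem sE8_smul (i : Fin 8) (v : Fin 8 → ℚ) :
    sE8 i • v = v - formE8 (simpleRootE8 i) v • simpleRootE8 i := by
  rw [formE8_simpleRootE8]
  rfl

theorem sE8_mem_WeylE8 (i : Fin 8) : sE8 i ∈ WeylE8 :=
  Subgroup.subset_closure (Set.mem_range_self i)

theorem sE8_smul_latticeInclE8 (i : Fin 8) (x : Fin 8 → ℤ) :
    sE8 i • latticeInclE8 x = latticeInclE8 (x - weightE8 x i • Pi.single i 1) := by
  rw [sE8_smul, formE8_simpleRootE8_latticeInclE8, map_sub, map_zsmul, latticeInclE8_single,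
    Int.cast_smul_eq_zsmul]

theorem formE8_smul_smul (g : WeylE8) (v w : Fin 8 → ℚ) :
    formE8 (g • v) (g • w) = formE8 v w := by
  obtain ⟨g, hg⟩ := g
  change formE8 (g • v) (g • w) = formE8 v w
  induction hg using Subgroup.closure_induction generalizing v w with
  | mem _ hs =>
    obtain ⟨i, rfl⟩ := hs
    have h2 : formE8 (simpleRootE8 i) (simpleRootE8 i) = 2 := by
      rw [formE8_simpleRootE8, phiE8_single]
    simp only [sE8_smul, map_sub, map_smul, LinearMap.sub_apply, LinearMap.smul_apply, smul_eq_mul,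
      formE8_comm v (simpleRootE8 i), h2]
    ring
  | one => simp only [one_smul]
  | mul g h _ _ ihg ihh => rw [mul_smul, mul_smul, ihg, ihh]
  | inv g _ ih => rw [← ih, smul_inv_smul, smul_inv_smul]

/-- The root system of type `E₈` in `ℚ⁸`. -/
def rootSetE8 : Set (Fin 8 → ℚ) := latticeInclE8 '' {x | x ∈ rootsE8}

theorem rootSetE8_finite : rootSetE8.Finite :=
  (List.finite_toSet rootsE8).image latticeInclE8

theorem formE8_self {v : Fin 8 → ℚ} (hv : v ∈ rootSetE8) : formE8 v v = 2 := by
  obtain ⟨x, hx, rfl⟩ := hv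
  rw [formE8_latticeInclE8, dotProduct_weightE8_self hx, Int.cast_ofNat]

theorem smul_mem_rootSetE8 (g : WeylE8) {v : Fin 8 → ℚ} (hv : v ∈ rootSetE8) :
    g • v ∈ rootSetE8 := by
  have hle : WeylE8 ≤ stabilizer (Module.End ℚ (Fin 8 → ℚ))ˣ rootSetE8 := by
    refine (Subgroup.closure_le _).2 (Set.range_subset_iff.2 fun i =>
      (mem_stabilizer_set_iff_smul_set_subset rootSetE8_finite).2 ?_)
    rintro _ ⟨_, ⟨x, hx, rfl⟩, rfl⟩
    exact ⟨_, reflect_mem_rootsE8 hx i, (sE8_smul_latticeInclE8 i x).symm⟩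
  rw [← mem_stabilizer_iff.1 (hle g.2)]
  exact Set.smul_mem_smul_set hv

theorem latticeInclE8_mem_reflectionVectors {x : Fin 8 → ℤ} (hx : x ∈ posRootsE8) :
    latticeInclE8 x ∈ reflectionVectors WeylE8 formE8 := by
  by_contra hnot
  obtain ⟨m, ⟨hm, hmrefl⟩, hmin⟩ := Set.exists_min_image
    {x | x ∈ posRootsE8 ∧ latticeInclE8 x ∉ reflectionVectors WeylE8 formE8} (fun x => ∑ i, x i)
    ((List.finite_toSet posRootsE8).subset fun x hx => hx.1) ⟨x, hx, hnot⟩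
  obtain ⟨i, hi⟩ := exists_weightE8_pos m hm
  rcases eq_or_ne m (Pi.single i 1) with rfl | hmi
  · refine hmrefl ⟨⟨sE8 i, sE8_mem_WeylE8 i⟩, fun v => ?_⟩
    rw [latticeInclE8_single]
    exact sE8_smul i v
  · refine (hmin (m - weightE8 m i • Pi.single i 1)
      ⟨reflect_mem_posRootsE8 hm hmi, fun h => ?_⟩).not_gt ?_
    · rw [← sE8_smul_latticeInclE8] at h
      have hmem := smul_mem_reflectionVectors formE8_smul_smul ⟨sE8 i, sE8_mem_WeylE8 i⟩ h
      exact hmrefl (reflE8_apply_self i (latticeInclE8 m) ▸ hmem)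
    · simpa [Finset.sum_sub_distrib, ← Finset.mul_sum] using hi

theorem rootSetE8_subset_reflectionVectors :
    rootSetE8 ⊆ reflectionVectors WeylE8 formE8 := by
  rintro _ ⟨x, hx, rfl⟩
  rcases mem_rootsE8.1 hx with h | h
  · exact latticeInclE8_mem_reflectionVectors h
  · rw [← neg_neg x, map_neg]
    exact neg_mem_reflectionVectors (latticeInclE8_mem_reflectionVectors h)

theorem latticeInclE8_image_chainRootsE8 (i : Fin 8) :
    latticeInclE8 '' {x | x ∈ chainRootsE8 i} =
      {v ∈ rootSetE8 | ∀ w ∈ simpleRootE8 '' Set.Ioi i,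
        formE8 v w = formE8 (simpleRootE8 i) w} := by
  ext v
  simp only [rootSetE8, Set.mem_ofPred_eq, Set.forall_mem_image, Set.mem_Ioi, chainRootsE8,
    List.mem_filter, decide_eq_true_eq]
  constructor
  · rintro ⟨x, ⟨hx, hxi⟩, rfl⟩
    refine ⟨⟨x, hx, rfl⟩, fun j hj => ?_⟩
    rw [formE8_comm, formE8_simpleRootE8_latticeInclE8, formE8_simpleRootE8_simpleRootE8, hxi j hj]
  · rintro ⟨⟨x, hx, rfl⟩, hxi⟩
    refine ⟨x, ⟨hx, fun j hj => ?_⟩, rfl⟩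
    have hj := hxi hj
    rwa [formE8_comm, formE8_simpleRootE8_latticeInclE8, formE8_simpleRootE8_simpleRootE8,
      Int.cast_inj] at hj

theorem orbit_fixingSubgroup_WeylE8 (i : Fin 8) :
    orbit (fixingSubgroup WeylE8 (simpleRootE8 '' Set.Ioi i))
      (simpleRootE8 i) = latticeInclE8 '' {x | x ∈ chainRootsE8 i} := by
  rw [latticeInclE8_image_chainRootsE8]
  refine orbit_fixingSubgroup_eq formE8_smul_smul rootSetE8_finite (fun g v => smul_mem_rootSetE8 g)
    rootSetE8_subset_reflectionVectors (fun v => formE8_self)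
    ⟨_, mem_rootsE8.2 (.inl (single_mem_posRootsE8 i)), latticeInclE8_single i⟩ ?_
  rw [← latticeInclE8_image_chainRootsE8]
  rintro _ ⟨x, hx, rfl⟩ hxi
  rcases exists_ascent_chainRootsE8 i x hx with rfl | ⟨y, hy, hlt, hyx⟩
  · exact absurd (latticeInclE8_single i) hxi
  · refine ⟨_, ⟨y, hy, rfl⟩, ?_, ?_⟩
    · rw [formE8_comm, formE8_comm _ (simpleRootE8 i)]
      simpa only [formE8_simpleRootE8_latticeInclE8, Int.cast_lt] using hlt
    · rw [formE8_latticeInclE8, hyx, Int.cast_one]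

theorem ncard_chainRootsE8 (i : Fin 8) : (latticeInclE8 '' {x | x ∈ chainRootsE8 i}).ncard =
    ![1, 2, 6, 10, 16, 27, 56, 240] i := by
  have hnodup : (chainRootsE8 i).Nodup := nodup_codeOfRoot_rootsE8.of_map.filter _
  rw [Set.ncard_image_of_injective _ latticeInclE8_injective, ← List.coe_toFinset,
    Set.ncard_coe_finset, List.toFinset_card_of_nodup hnodup, length_chainRootsE8]

theorem natCard_WeylE8 : Nat.card WeylE8 = 696729600 := by
  have hbot : fixingSubgroup WeylE8 (Set.range simpleRootE8) = ⊥ := by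
    refine (Subgroup.eq_bot_iff_forall _).2 fun g hg => Subtype.ext (Units.ext ?_)
    refine (Pi.basisFun ℚ (Fin 8)).ext fun i => ?_
    rw [Pi.basisFun_apply]
    exact (mem_fixingSubgroup_iff WeylE8).1 hg _ (Set.mem_range_self i)
  rw [natCard_eq_natCard_fixingSubgroup_range_mul_prod simpleRootE8, hbot, Subgroup.card_bot,
    one_mul]
  simp only [orbit_fixingSubgroup_WeylE8, ncard_chainRootsE8]
  rfl

instance finite_WeylE8 : Finite WeylE8 :=
  Nat.finite_of_card_ne_zero (by rw [natCard_WeylE8]; decide)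

theorem isGradedReflection_sE8 (i : Fin 8) :
    IsGradedReflection (homogeneousSubmodule (Fin 8) ℚ) (sE8 i) := by
  have hφ : phiE8 i ≠ 0 := fun h => by simpa [h] using phiE8_single i
  exact isGradedReflection_of_inv_smul_eq hφ fun _ => rfl

theorem closure_simpleReflections_WeylE8 :
    Subgroup.closure ((↑) ⁻¹' Set.range sE8 : Set WeylE8) = ⊤ :=
  Subgroup.closure_closure_coe_preimage

attribute [local instance] MvPolynomial.gradedAlgebra in
theorem free_fixedPoints_WeylE8 :
    Module.Free (FixedPoints.subalgebra ℚ (MvPolynomial (Fin 8) ℚ) WeylE8)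
      (MvPolynomial (Fin 8) ℚ) := by
  have := Fintype.ofFinite WeylE8
  refine free_fixedPoints_of_isGradedReflection (Nat.cast_ne_zero.2 Fintype.card_ne_zero)
    (homogeneousSubmodule_zero _).le (fun g => smul_mem_homogeneousSubmodule g.1)
    closure_simpleReflections_WeylE8 fun s hs => ?_
  obtain ⟨i, hi⟩ := hs
  have hrefl := isGradedReflection_sE8 i
  rw [hi] at hrefl
  exact hrefl

end WeylGroupE8

/-- The polynomial algebra `ℚ[x₁,…,x₈]` is a free module of
rank `696729600 = |W(E₈)|` over the invariant subalgebra. -/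
theorem free_over_invariants_WE8 :
    Module.Free invSubalgebra (MvPolynomial (Fin 8) ℚ) ∧
    Module.rank invSubalgebra (MvPolynomial (Fin 8) ℚ) = 696729600 := by
  rw [invSubalgebra_eq_fixedPoints]
  refine ⟨free_fixedPoints_WeylE8, ?_⟩
  rw [rank_fixedPoints, natCard_WeylE8, Nat.cast_ofNat]
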